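/- For all integers s_1 ≥ 1, s_2 ≥ 1 and k ≥ 1, FP(s_1 + s_2, k) ≤ FP(s_1, k) + FP(s_2, k). -/

import Mathlib

/-!
If `G₁` and `G₂` are functional `k`-PIR codes of dimensions `s₁` and `s₂`, then the block diagonal
matrix with blocks `G₁`, `G₂` is one of dimension `s₁ + s₂`: a request splits as `(v₁, v₂)`, and the
`j`-th recovery set is the union of the `j`-th recovery set of `v₁` in the first block of columns
and that of `v₂` in the second. A zero half is recovered by `k` empty sets, which are pairwise
disjoint (`IsFunctionalPIR.exists_recovery`). Because `sInf ∅ = 0` in `ℕ`, one also has to know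
that codes exist for all `s` and `k`, so that `FP s₁ k` and `FP s₂ k` are attained: `k` copies of
the identity matrix side by side form such a code (`exists_isFunctionalPIR`).
-/


open scoped BigOperators

/-- `G` is a functional `k`-PIR code of dimension `s` and length `n`: for every nonzero
request `v : F_2^s` there are `k` pairwise disjoint sets of column indices, each of whose
columns sum to `v`. -/
def IsFunctionalPIR (s n k : ℕ) (G : Matrix (Fin s) (Fin n) (ZMod 2)) : Prop :=
  ∀ v : Fin s → ZMod 2, v ≠ 0 →
    ∃ R : Fin k → Finset (Fin n),
      (∀ j j' : Fin k, j ≠ j' → Disjoint (R j) (R j')) ∧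
      (∀ j : Fin k, ∀ i : Fin s, ∑ l ∈ R j, G i l = v i)

/-- `G` is a functional `k`-batch code of dimension `s` and length `n`: for every `k`-tuple of
nonzero requests there are `k` pairwise disjoint sets of column indices such that the columns
of the `j`-th set sum to the `j`-th request. -/
def IsFunctionalBatch (s n k : ℕ) (G : Matrix (Fin s) (Fin n) (ZMod 2)) : Prop :=
  ∀ v : Fin k → (Fin s → ZMod 2), (∀ j, v j ≠ 0) →
    ∃ R : Fin k → Finset (Fin n),
      (∀ j j' : Fin k, j ≠ j' → Disjoint (R j) (R j')) ∧
      (∀ j : Fin k, ∀ i : Fin s, ∑ l ∈ R j, G i l = v j i)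

/-- `FP s k` is the minimum length of a functional `k`-PIR code of dimension `s`. -/
noncomputable def FP (s k : ℕ) : ℕ :=
  sInf {n : ℕ | ∃ G : Matrix (Fin s) (Fin n) (ZMod 2), IsFunctionalPIR s n k G}

/-- `FB s k` is the minimum length of a functional `k`-batch code of dimension `s`. -/
noncomputable def FB (s k : ℕ) : ℕ :=
  sInf {n : ℕ | ∃ G : Matrix (Fin s) (Fin n) (ZMod 2), IsFunctionalBatch s n k G}

/-- A functional PIR code also serves the zero request, by means of empty recovery sets. -/
lemma IsFunctionalPIR.exists_recovery {s n k : ℕ} {G : Matrix (Fin s) (Fin n) (ZMod 2)}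
    (hG : IsFunctionalPIR s n k G) (v : Fin s → ZMod 2) :
    ∃ R : Fin k → Finset (Fin n),
      (∀ j j' : Fin k, j ≠ j' → Disjoint (R j) (R j')) ∧
      (∀ j : Fin k, ∀ i : Fin s, ∑ l ∈ R j, G i l = v i) := by
  by_cases hv : v = 0
  · exact ⟨fun _ => ∅, by simp, by simp [hv]⟩
  · exact hG v hv

/-- The block diagonal matrix of two functional `k`-PIR codes is a functional `k`-PIR code. -/
lemma IsFunctionalPIR.blockDiagonal {s₁ s₂ n₁ n₂ k : ℕ}
    {G₁ : Matrix (Fin s₁) (Fin n₁) (ZMod 2)} {G₂ : Matrix (Fin s₂) (Fin n₂) (ZMod 2)}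
    (h₁ : IsFunctionalPIR s₁ n₁ k G₁) (h₂ : IsFunctionalPIR s₂ n₂ k G₂) :
    IsFunctionalPIR (s₁ + s₂) (n₁ + n₂) k
      (Matrix.reindex finSumFinEquiv finSumFinEquiv (Matrix.fromBlocks G₁ 0 0 G₂)) := by
  intro v _
  obtain ⟨R₁, hd₁, hR₁⟩ := h₁.exists_recovery fun i => v (Fin.castAdd s₂ i)
  obtain ⟨R₂, hd₂, hR₂⟩ := h₂.exists_recovery fun i => v (Fin.natAdd s₁ i)
  refine ⟨fun j => ((R₁ j).disjSum (R₂ j)).map finSumFinEquiv.toEmbedding, ?_, ?_⟩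
  · intro j j' hj
    rw [Finset.disjoint_map, Finset.disjoint_left]
    rintro (a | a) ha ha'
    · exact Finset.disjoint_left.1 (hd₁ j j' hj) (Finset.inl_mem_disjSum.1 ha)
        (Finset.inl_mem_disjSum.1 ha')
    · exact Finset.disjoint_left.1 (hd₂ j j' hj) (Finset.inr_mem_disjSum.1 ha)
        (Finset.inr_mem_disjSum.1 ha')
  · intro j i
    obtain ⟨i, rfl⟩ := finSumFinEquiv.surjective i
    rcases i with i | i
    · simpa [Finset.sum_disjSum] using hR₁ j i
    · simpa [Finset.sum_disjSum] using hR₂ j i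

/-- The matrix made of `k` copies of the identity is a functional `k`-PIR code: the `j`-th recovery
set of `v` is the support of `v` inside the `j`-th copy. -/
lemma exists_isFunctionalPIR (s k : ℕ) :
    ∃ n, ∃ G : Matrix (Fin s) (Fin n) (ZMod 2), IsFunctionalPIR s n k G := by
  refine ⟨k * s, fun i l => if i = (finProdFinEquiv.symm l).2 then 1 else 0, fun v _ => ?_⟩
  refine ⟨fun j => (({j} : Finset (Fin k)) ×ˢ Finset.univ.filter fun i => v i = 1).map
    finProdFinEquiv.toEmbedding, ?_, ?_⟩
  · intro j j' hj
    rw [Finset.disjoint_map, Finset.disjoint_product]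
    exact Or.inl (by simpa using hj)
  · intro j i
    have h01 : ∀ x : ZMod 2, (if x = 1 then (1 : ZMod 2) else 0) = x := by decide
    rw [Finset.sum_map, Finset.sum_product, Finset.sum_singleton, ← h01 (v i)]
    simp only [Equiv.coe_toEmbedding, Equiv.symm_apply_apply, Finset.sum_ite_eq,
      Finset.mem_filter, Finset.mem_univ, true_and]

lemma exists_isFunctionalPIR_FP (s k : ℕ) :
    ∃ G : Matrix (Fin s) (Fin (FP s k)) (ZMod 2), IsFunctionalPIR s (FP s k) k G :=
  Nat.sInf_mem (s := {n : ℕ | ∃ G : Matrix (Fin s) (Fin n) (ZMod 2), IsFunctionalPIR s n k G})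
    (exists_isFunctionalPIR s k)

theorem FP_add_dims (s₁ s₂ k : ℕ) (hs₁ : 1 ≤ s₁) (hs₂ : 1 ≤ s₂) (hk : 1 ≤ k) :
    FP (s₁ + s₂) k ≤ FP s₁ k + FP s₂ k := by
  obtain ⟨G₁, h₁⟩ := exists_isFunctionalPIR_FP s₁ k
  obtain ⟨G₂, h₂⟩ := exists_isFunctionalPIR_FP s₂ k
  exact Nat.sInf_le ⟨_, h₁.blockDiagonal h₂⟩
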